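/- Let G be a finite group, M a subnormal subgroup of G, χ an irreducible character of G, and ψ an irreducible constituent of the restriction χ|_M. Then cod(ψ) divides cod(χ). -/

import Mathlib

open CategoryTheory

/-- The kernel of (the character of) a finite-dimensional complex representation. -/
noncomputable def charKer {G : Type} [Group G] (V : FDRep ℂ G) : Subgroup G :=
  MonoidHom.ker (Representation.asGroupHom V.ρ)

/-- The codegree of a character: `|G : ker χ| / χ(1)`. -/
noncomputable def codeg {G : Type} [Group G] (V : FDRep ℂ G) : ℕ :=
  (charKer V).index / Module.finrank ℂ V

/-- The set of codegrees of irreducible characters of `G`. -/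
def codSet (G : Type) [Group G] : Set ℕ :=
  {n | ∃ V : FDRep ℂ G, Simple V ∧ codeg V = n}

/-- Inner product of class functions on a finite group. -/
noncomputable def innerChar (G : Type) [Group G] (f g : G → ℂ) : ℂ :=
  (∑ᶠ x : G, f x * starRingEnd ℂ (g x)) / Nat.card G

open scoped Classical in
/-- The induced character `θ^G` of a character `θ` of a subgroup `H ≤ G`. -/
noncomputable def indChar {G : Type} [Group G] (H : Subgroup G) (θ : FDRep ℂ ↥H) : G → ℂ :=
  fun g => (∑ᶠ x : G, if h : x * g * x⁻¹ ∈ H then θ.character ⟨x * g * x⁻¹, h⟩ else 0) /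
    Nat.card ↥H

/-- `M` is subnormal in `G`: there is a chain `M = M₀ ⊴ M₁ ⊴ ⋯ ⊴ Mₖ = G`. -/
def IsSubnormal {G : Type} [Group G] (M : Subgroup G) : Prop :=
  ∃ (n : ℕ) (c : Fin (n + 1) → Subgroup G), c 0 = M ∧ c (Fin.last n) = ⊤ ∧
    ∀ i : Fin n, c i.castSucc ≤ c i.succ ∧ ((c i.castSucc).subgroupOf (c i.succ)).Normal

/-!
Let `ρ` be an irreducible representation of `G` on `V`, let `N ⊴ G`, and let `ψ` be an irreducible
constituent of `ρ|_N` on `U`. Every element of the inertia group `T` of `ψ` acts on the multiplicity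
space `W = Hom_N(ψ, ρ)` up to a scalar. Normalising these operators to have determinant `1` leaves
only finitely many choices, so a finite central extension of `T` acts on `W`; this action is
irreducible, and the elements above `N · ker ρ` act by scalars. As the degree of an irreducible
representation divides the index of any subgroup acting by scalars, `dim W` divides
`|T : N · ker ρ|`. Together with `dim V = |G : T| · dim W · dim U` this shows that `dim V` divides
`|G : N · ker ρ| · dim U`. Since `N ∩ ker ρ ≤ ker ψ`, multiplying by the codegree of `ψ` gives the
claim for `N`. For a subnormal subgroup, at each step down the chain one passes to an irreducible
constituent of the restriction of `ρ` which still contains `ψ`.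
-/

open Module Representation

section Integrality

theorem natCast_dvd_of_isIntegral_div {k : Type*} [Field k] [CharZero k] {a b : ℕ} (hb : b ≠ 0)
    (h : IsIntegral ℤ ((a : k) / b)) :
    b ∣ a := by
  have h_rat : IsIntegral ℤ ((a : ℚ) / b) := by
    rw [← isIntegral_algebraMap_iff (algebraMap ℚ k).injective]
    simpa using h
  obtain ⟨z, hz⟩ := IsIntegrallyClosed.isIntegral_iff.mp h_rat
  have hz' : (z : ℚ) * b = a := by simpa [eq_div_iff, hb] using hz
  refine Int.natCast_dvd_natCast.mp ⟨z, ?_⟩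
  rw [mul_comm]
  exact_mod_cast hz'.symm

variable {k V : Type*} [Field k] [AddCommGroup V] [Module k V]

theorem isIntegral_trace_of_isOfFinOrder [IsAlgClosed k] [FiniteDimensional k V]
    {T : End k V} (hT : IsOfFinOrder T) : IsIntegral ℤ (LinearMap.trace k V T) := by
  obtain ⟨n, hn, hTn⟩ := isOfFinOrder_iff_pow_eq_one.mp hT
  rw [LinearMap.trace_eq_matrix_trace k (finBasis k V), Matrix.trace_eq_sum_roots_charpoly,
    LinearMap.charpoly_toMatrix]
  refine IsIntegral.multiset_sum fun μ hμ => ?_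
  obtain ⟨v, hv⟩ := ((End.hasEigenvalue_iff_isRoot_charpoly _ _).mpr
    (Polynomial.isRoot_of_mem_roots hμ)).exists_hasEigenvector
  have hμn : μ ^ n = 1 := smul_left_injective k hv.2 (by simpa [hTn] using (hv.pow_apply n).symm)
  exact IsIntegral.of_pow hn (hμn ▸ isIntegral_one)

theorem isIntegral_of_smul_one_mem_span [Nontrivial V] {Γ : Type*} [Monoid Γ] [Finite Γ]
    (σ : Representation k Γ V) {q : k}
    (hq : q • (1 : End k V) ∈ Submodule.span (integralClosure ℤ k) (Set.range σ)) :
    IsIntegral ℤ q := by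
  set R := integralClosure ℤ k
  have h_span : Subalgebra.toSubmodule (Algebra.adjoin R (Set.range σ)) =
      Submodule.span R (Set.range σ) := by
    rw [Algebra.adjoin_eq_span, ← MonoidHom.coe_mrange, Submonoid.closure_eq]
  have h_int : IsIntegral R (algebraMap k (End k V) q) := by
    rw [Algebra.algebraMap_eq_smul_one]
    refine IsIntegral.of_mem_of_fg _ ?_ _ (h_span.ge hq)
    rw [h_span]
    exact Submodule.fg_span (Set.finite_range σ)
  rw [isIntegral_algebraMap_iff (FaithfulSMul.algebraMap_injective k (End k V))] at h_int
  exact isIntegral_trans q h_int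

end Integrality

section Schur

variable {k G V W : Type*} [Field k] [Group G] [AddCommGroup V] [Module k V] [AddCommGroup W]
  [Module k W] {ρ : Representation k G V} {σ : Representation k G W}

variable (ρ) in
/-- The largest subrepresentation of `ρ` on which the linear map `T` vanishes. -/
def kerCore (T : V →ₗ[k] W) : Subrepresentation ρ where
  toSubmodule := ⨅ g, LinearMap.ker (T ∘ₗ ρ g)
  apply_mem_toSubmodule g v hv := by
    simp only [Submodule.mem_iInf, LinearMap.mem_ker, LinearMap.comp_apply] at hv ⊢
    intro h
    rw [← End.mul_apply, ← map_mul, hv]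

theorem mem_kerCore {T : V →ₗ[k] W} {v : V} : v ∈ kerCore ρ T ↔ ∀ g, T (ρ g v) = 0 := by
  change v ∈ (⨅ g, LinearMap.ker (T ∘ₗ ρ g) : Submodule k V) ↔ _
  simp only [Submodule.mem_iInf, LinearMap.mem_ker, LinearMap.comp_apply]

theorem eq_zero_of_kerCore_eq_top {T : V →ₗ[k] W} (hT : kerCore ρ T = ⊤) : T = 0 := by
  ext v
  have hv : v ∈ kerCore ρ T := hT ▸ trivial
  simpa using mem_kerCore.mp hv 1

theorem eq_zero_of_forall_apply_eq_zero [ρ.IsIrreducible] {v : V} (hv : v ≠ 0) (T : V →ₗ[k] W)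
    (hT : ∀ g, T (ρ g v) = 0) : T = 0 := by
  refine eq_zero_of_kerCore_eq_top ((eq_bot_or_eq_top (kerCore ρ T)).resolve_left fun h => hv ?_)
  have hv_mem : v ∈ kerCore ρ T := mem_kerCore.mpr hT
  rwa [h] at hv_mem

theorem isIrreducible_of_forall_dual_eq_zero [Nontrivial V]
    (h : ∀ v ≠ 0, ∀ l : Dual k V, (∀ g, l (ρ g v) = 0) → l = 0) : ρ.IsIrreducible where
  exists_pair_ne := ⟨⊥, ⊤, fun h => bot_ne_top (congrArg Subrepresentation.toSubmodule h)⟩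
  eq_bot_or_eq_top S := by
    refine or_iff_not_imp_right.mpr fun hS => ?_
    have hS' : S.toSubmodule < ⊤ := lt_top_iff_ne_top.mpr fun h =>
      hS (Subrepresentation.toSubmodule_injective h)
    obtain ⟨l, hl, hSl⟩ := Submodule.exists_le_ker_of_lt_top _ hS'
    refine Subrepresentation.toSubmodule_injective ((Submodule.eq_bot_iff _).mpr fun v hv => ?_)
    by_contra hv0
    exact hl (h v hv0 l fun g => hSl (S.apply_mem_toSubmodule g hv))

theorem finrank_ne_zero_of_isIrreducible [FiniteDimensional k V] (ρ : Representation k G V)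
    [ρ.IsIrreducible] : finrank k V ≠ 0 := by
  rw [← pos_iff_ne_zero, finrank_pos_iff]
  by_contra h
  rw [not_nontrivial_iff_subsingleton] at h
  exact bot_ne_top (Subrepresentation.toSubmodule_injective (ρ := ρ) (Subsingleton.elim _ _))

theorem eq_trace_div_finrank_smul_one [IsAlgClosed k] [CharZero k] [FiniteDimensional k V]
    [ρ.IsIrreducible] {T : End k V} (hT : ∀ g, Commute T (ρ g)) :
    T = (LinearMap.trace k V T / finrank k V) • 1 := by
  obtain ⟨c, hc⟩ := (IsIrreducible.algebraMap_intertwiningMap_bijective_of_isAlgClosed (ρ := ρ)).2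
    ⟨T, hT⟩
  rw [Algebra.algebraMap_eq_smul_one] at hc
  obtain rfl : c • (1 : End k V) = T := congrArg IntertwiningMap.toLinearMap hc
  have : (finrank k V : k) ≠ 0 := Nat.cast_ne_zero.mpr (finrank_ne_zero_of_isIrreducible ρ)
  rw [map_smul, LinearMap.trace_one, smul_eq_mul, mul_div_cancel_right₀ _ this]

/-- The `G`-equivariant map `∑ g, σ g ∘ T ∘ ρ g⁻¹` obtained from a linear map `T`; it is
`|G|` times the average of `T`, which spares the invertibility of `|G|`. -/
def sumConj [Fintype G] (ρ : Representation k G V) (σ : Representation k G W) (T : V →ₗ[k] W) :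
    IntertwiningMap ρ σ where
  toLinearMap := ∑ g, σ g ∘ₗ T ∘ₗ ρ g⁻¹
  isIntertwining' x := by
    ext v
    simp only [LinearMap.comp_apply, LinearMap.sum_apply, map_sum]
    refine Fintype.sum_equiv (Equiv.mulLeft x⁻¹) _ _ fun g => ?_
    simp [← End.mul_apply, ← map_mul]

theorem sumConj_apply [Fintype G] (T : V →ₗ[k] W) (v : V) :
    sumConj ρ σ T v = ∑ g, σ g (T (ρ g⁻¹ v)) := by
  simp [sumConj, LinearMap.sum_apply]

theorem sumConj_self_apply [IsAlgClosed k] [CharZero k] [FiniteDimensional k V] [Fintype G]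
    [ρ.IsIrreducible] (T : End k V) (v : V) :
    sumConj ρ ρ T v = (Fintype.card G * LinearMap.trace k V T / finrank k V) • v := by
  have h := eq_trace_div_finrank_smul_one (ρ := ρ) (T := (sumConj ρ ρ T).toLinearMap)
    (sumConj ρ ρ T).isIntertwining'
  have h_trace (g : G) : LinearMap.trace k V (ρ g ∘ₗ T ∘ₗ ρ g⁻¹) = LinearMap.trace k V T := by
    rw [LinearMap.trace_comp_comm', LinearMap.comp_assoc, ← End.mul_eq_comp (ρ g⁻¹), ← map_mul,
      inv_mul_cancel, map_one]
    rfl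
  rw [← IntertwiningMap.toLinearMap_apply, h]
  simp only [sumConj, map_sum, h_trace, Finset.sum_const, Finset.card_univ, nsmul_eq_mul]
  rfl

end Schur

section ScalarSubgroup

theorem sum_eq_card_nsmul_sum_quotient {Γ E : Type*} [Group Γ] [Fintype Γ] [AddCommMonoid E]
    (Z : Subgroup Γ) [Fintype (Γ ⧸ Z)] {F : Γ → E} (hF : ∀ g, ∀ z ∈ Z, F (g * z) = F g) :
    ∑ g, F g = Nat.card Z • ∑ q : Γ ⧸ Z, F q.out := by
  classical
  have h_out (g : Γ) : F g = F (Quotient.out (g : Γ ⧸ Z)) := by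
    obtain ⟨z, hz⟩ := QuotientGroup.mk_out_eq_mul Z g
    rw [hz, hF g z z.2]
  calc ∑ g, F g = ∑ p : (Γ ⧸ Z) × Z, F p.1.out :=
        Fintype.sum_equiv Subgroup.groupEquivQuotientProdSubgroup _ _ h_out
    _ = Nat.card Z • ∑ q : Γ ⧸ Z, F q.out := by
        simp only [Fintype.sum_prod_type, Finset.sum_const, Finset.card_univ, Finset.smul_sum,
          Nat.card_eq_fintype_card]

variable {k Γ W : Type*} [Field k] [IsAlgClosed k] [Group Γ] [AddCommGroup W]
  [Module k W] [FiniteDimensional k W] (σ : Representation k Γ W)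

theorem isIntegral_character [Finite Γ] (g : Γ) : IsIntegral ℤ (σ.character g) :=
  isIntegral_trace_of_isOfFinOrder (σ.isOfFinOrder (isOfFinOrder_of_finite g))

variable [CharZero k] [σ.IsIrreducible]

theorem sum_character_inv_smul [Fintype Γ] :
    ∑ g, σ.character g⁻¹ • σ g = ((Nat.card Γ : k) / finrank k W) • (1 : End k W) := by
  have h_comm (x : Γ) : Commute (∑ g, σ.character g⁻¹ • σ g) (σ x) := by
    rw [Commute, SemiconjBy, Finset.sum_mul, Finset.mul_sum]
    refine Fintype.sum_equiv (MulAut.conj x⁻¹).toEquiv _ _ fun g => ?_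
    have h_char : σ.character (x⁻¹ * g⁻¹ * x) = σ.character g⁻¹ := by
      simpa using σ.char_conj g⁻¹ x⁻¹
    simp [mul_assoc, ← map_mul, ← h_char]
  have h_card : (Nat.card Γ : k) ≠ 0 := Nat.cast_ne_zero.mpr Nat.card_pos.ne'
  have := invertibleOfNonzero h_card
  have h_norm : ∑ g, σ.character g⁻¹ * σ.character g = Nat.card Γ := by
    have h := card_inv_mul_sum_char_mul_char_eq_finrank σ σ
    rw [IsIrreducible.finrank_intertwiningMap_self, inv_mul_eq_iff_eq_mul₀ h_card] at h
    simpa [mul_comm] using h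
  rw [eq_trace_div_finrank_smul_one h_comm, map_sum]
  simp only [map_smul, smul_eq_mul]
  rw [← h_norm]
  rfl

/-- The central element `∑ g, χ(g⁻¹) g` of the group algebra acts as `|Γ| / χ(1)`, and its terms
are constant on the cosets of `Z`. -/
theorem finrank_dvd_index_of_forall_eq_smul_one [Finite Γ] {Z : Subgroup Γ}
    (hZ : ∀ z ∈ Z, ∃ c : k, σ z = c • 1) : finrank k W ∣ Z.index := by
  have := Fintype.ofFinite Γ
  have := Fintype.ofFinite (Γ ⧸ Z)
  have : Nontrivial W :=
    finrank_pos_iff.mp (pos_iff_ne_zero.mpr (finrank_ne_zero_of_isIrreducible σ))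
  have h_invariant (g : Γ) (z : Γ) (hz : z ∈ Z) :
      σ.character (g * z)⁻¹ • σ (g * z) = σ.character g⁻¹ • σ g := by
    obtain ⟨c, hc⟩ := hZ z hz
    obtain ⟨d, hd⟩ := hZ z⁻¹ (inv_mem hz)
    have hdc : d * c = 1 := by
      refine smul_left_injective k (one_ne_zero (α := End k W)) ?_
      calc (d * c) • (1 : End k W) = σ z⁻¹ * σ z := by rw [hc, hd, smul_mul_smul_comm, mul_one]
        _ = (1 : k) • 1 := by rw [← map_mul, inv_mul_cancel, map_one, one_smul]
    simp only [Representation.character, mul_inv_rev, map_mul, hc, hd, smul_mul_assoc, one_mul,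
      mul_smul_comm, mul_one, map_smul, smul_smul, smul_eq_mul, hdc, mul_right_comm]
  have h_sum : ((Z.index : k) / finrank k W) • (1 : End k W) =
      ∑ q : Γ ⧸ Z, σ.character q.out⁻¹ • σ q.out := by
    have hZ : (Nat.card Z : k) ≠ 0 := Nat.cast_ne_zero.mpr Nat.card_pos.ne'
    have h := sum_eq_card_nsmul_sum_quotient Z
      (F := fun g => σ.character g⁻¹ • σ g) h_invariant
    rw [sum_character_inv_smul, ← Z.card_mul_index, Nat.cast_mul, mul_div_assoc, mul_smul,
      ← Nat.cast_smul_eq_nsmul k] at h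
    exact smul_right_injective _ hZ h
  refine natCast_dvd_of_isIntegral_div (k := k) (finrank_ne_zero_of_isIrreducible σ)
    (isIntegral_of_smul_one_mem_span σ ?_)
  rw [h_sum]
  exact Submodule.sum_mem _ fun q _ => Submodule.smul_mem _
    (⟨_, isIntegral_character σ q.out⁻¹⟩ : integralClosure ℤ k) (Submodule.subset_span ⟨_, rfl⟩)

end ScalarSubgroup

section Multiplicity

theorem exists_trace_comp_eq {k U V : Type*} [Field k] [AddCommGroup U] [Module k U]
    [FiniteDimensional k U] [AddCommGroup V] [Module k V] (l : Dual k (U →ₗ[k] V)) :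
    ∃ T : V →ₗ[k] U, ∀ f, LinearMap.trace k U (T ∘ₗ f) = l f := by
  let b := finBasis k U
  refine ⟨∑ i, (l ∘ₗ LinearMap.smulRightₗ (b.coord i)).smulRight (b i), fun f => ?_⟩
  have h_expand : f = ∑ i, (b.coord i).smulRight (f (b i)) :=
    b.ext fun j => by simp [LinearMap.sum_apply, Finsupp.single_apply]
  rw [LinearMap.trace_eq_matrix_trace k b, Matrix.trace]
  conv_rhs => rw [h_expand, map_sum]
  simp [LinearMap.toMatrix_apply, Finsupp.single_apply]

variable {k N U V : Type*} [Field k] [IsAlgClosed k] [CharZero k] [Group N] [Finite N]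
  [AddCommGroup U] [Module k U] [FiniteDimensional k U] [AddCommGroup V] [Module k V]
  {ψ : Representation k N U} [ψ.IsIrreducible] {σ : Representation k N V}

theorem exists_intertwiningMap_apply_eq_smul (l : Dual k (IntertwiningMap ψ σ)) :
    ∃ h : IntertwiningMap σ ψ, ∀ f u, h (f u) = l f • u := by
  have := Fintype.ofFinite N
  obtain ⟨r, hr⟩ := (IntertwiningMap.toLinearMapl ψ σ).exists_leftInverse_of_injective
    (LinearMap.ker_eq_bot.mpr (IntertwiningMap.toLinearMap_injective ψ σ))
  obtain ⟨T, hT⟩ := exists_trace_comp_eq (((finrank k U : k) / Fintype.card N) • l ∘ₗ r)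
  refine ⟨sumConj σ ψ T, fun f u => ?_⟩
  have h_trace : LinearMap.trace k U (T ∘ₗ f.toLinearMap) = finrank k U / Fintype.card N * l f := by
    rw [hT]
    simp [show r f.toLinearMap = f from LinearMap.congr_fun hr f]
  have h_comp : sumConj σ ψ T (f u) = sumConj ψ ψ (T ∘ₗ f.toLinearMap) u := by
    simp [sumConj_apply, f.isIntertwining]
  have hU : (finrank k U : k) ≠ 0 := Nat.cast_ne_zero.mpr (finrank_ne_zero_of_isIrreducible ψ)
  have hN : (Fintype.card N : k) ≠ 0 := Nat.cast_ne_zero.mpr Fintype.card_ne_zero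
  rw [h_comp, sumConj_self_apply, h_trace]
  congr 1
  field_simp

theorem exists_apply_apply_ne_zero [Nontrivial (IntertwiningMap ψ σ)] :
    ∃ (f : IntertwiningMap ψ σ) (h : IntertwiningMap σ ψ) (u : U), h (f u) ≠ 0 := by
  obtain ⟨f, hf⟩ := exists_ne (0 : IntertwiningMap ψ σ)
  obtain ⟨l, hl⟩ : ∃ l : Dual k _, l f ≠ 0 := by
    by_contra! hl
    exact hf ((forall_dual_apply_eq_zero_iff k f).mp hl)
  obtain ⟨h, hh⟩ := exists_intertwiningMap_apply_eq_smul l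
  have : Nontrivial U :=
    finrank_pos_iff.mp (pos_iff_ne_zero.mpr (finrank_ne_zero_of_isIrreducible ψ))
  obtain ⟨u, hu⟩ := exists_ne (0 : U)
  exact ⟨f, h, u, hh f u ▸ smul_ne_zero hl hu⟩

/-- The isotypic part of `σ` of type `ψ`: the sum of the images of all equivariant maps from `ψ`
to `σ`. -/
def isotypicPart {k N U V : Type*} [Field k] [Group N] [AddCommGroup U] [Module k U]
    [AddCommGroup V] [Module k V] (ψ : Representation k N U) (σ : Representation k N V) :
    Submodule k V :=
  ⨆ f : IntertwiningMap ψ σ, LinearMap.range f.toLinearMap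

variable (ψ σ) in
/-- With `f i` a basis of the equivariant maps from `ψ` to `σ` and `h i` maps back with
`h i ∘ f j = δ i j`, the projection is `∑ i, f i ∘ h i`. -/
theorem exists_isProj_isotypicPart [FiniteDimensional k V] :
    ∃ e : End k V, LinearMap.IsProj (isotypicPart ψ σ) e ∧
      LinearMap.trace k V e = finrank k (IntertwiningMap ψ σ) * finrank k U := by
  let b := finBasis k (IntertwiningMap ψ σ)
  choose h hh using fun i => exists_intertwiningMap_apply_eq_smul (b.coord i)
  let e : End k V := ∑ i, (b i).toLinearMap ∘ₗ (h i).toLinearMap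
  have e_apply (v : V) : e v = ∑ i, b i (h i v) := by simp [e, LinearMap.sum_apply]
  have e_fix (f : IntertwiningMap ψ σ) (u : U) : e (f u) = f u := by
    conv_rhs => rw [← b.sum_repr f]
    simp only [e_apply, hh, map_smul, IntertwiningMap.sum_apply, IntertwiningMap.coe_smul,
      Pi.smul_apply, Basis.coord_apply]
  refine ⟨e, ⟨fun v => ?_, fun v hv => ?_⟩, ?_⟩
  · rw [e_apply]
    exact Submodule.sum_mem _ fun i _ => Submodule.mem_iSup_of_mem (b i) ⟨_, rfl⟩
  · have h_le : isotypicPart ψ σ ≤ LinearMap.eqLocus e LinearMap.id :=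
      iSup_le fun f => LinearMap.range_le_iff_comap.mpr (by ext u; simp [e_fix])
    exact h_le hv
  · have h_comp (i) : (h i).toLinearMap ∘ₗ (b i).toLinearMap = LinearMap.id := by
      ext u
      simp [hh]
    have h_trace (i) :
        LinearMap.trace k V ((b i).toLinearMap ∘ₗ (h i).toLinearMap) = finrank k U := by
      rw [LinearMap.trace_comp_comm', h_comp, LinearMap.trace_id]
    simp [e, map_sum, h_trace]

end Multiplicity

section InertiaCover

variable {k G N U V : Type*} [Field k] [Group G] [Group N] [AddCommGroup U] [Module k U]
  [AddCommGroup V] [Module k V] {ρ : Representation k G V} {ψ : Representation k N U} {φ : N →* G}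

variable (ρ ψ φ) in
/-- The group of pairs `(g, B)` such that `B` is the action of `g` on the multiplicity space
`Hom_N(ψ, ρ)` normalised to have determinant `1`, that is, `(B f) ∘ A = ρ g ∘ f` for all `f` and
some automorphism `A` of the space of `ψ`. -/
def inertiaCover : Subgroup (G × SpecialLinearGroup k (IntertwiningMap ψ (ρ.comp φ))) where
  carrier := {p | ∃ A : U ≃ₗ[k] U, ∀ f u, p.2 f (A u) = ρ p.1 (f u)}
  one_mem' := ⟨LinearEquiv.refl k U, fun f u => by simp⟩
  mul_mem' := by
    rintro p q ⟨A, hA⟩ ⟨A', hA'⟩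
    exact ⟨A' ≪≫ₗ A, fun f u => by simp [hA, hA']⟩
  inv_mem' := by
    rintro p ⟨A, hA⟩
    refine ⟨A.symm, fun f u => ?_⟩
    have h := hA (p.2⁻¹ f) (A.symm u)
    have h_inv : p.2 (p.2⁻¹ f) = f := LinearEquiv.apply_symm_apply p.2.toLinearEquiv f
    rw [A.apply_symm_apply, h_inv] at h
    simp [h]

theorem mem_inertiaCover {g : G} {B : SpecialLinearGroup k (IntertwiningMap ψ (ρ.comp φ))} :
    (g, B) ∈ inertiaCover ρ ψ φ ↔ ∃ A : U ≃ₗ[k] U, ∀ f u, B f (A u) = ρ g (f u) :=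
  Iff.rfl

variable (ρ ψ φ) in
/-- The tautological representation of the inertia cover on the multiplicity space. -/
def inertiaCoverRep :
    Representation k (inertiaCover ρ ψ φ) (IntertwiningMap ψ (ρ.comp φ)) :=
  (LinearEquiv.automorphismGroup.toLinearMapMonoidHom).comp
    (SpecialLinearGroup.toLinearEquiv.comp
      ((MonoidHom.snd G _).comp (inertiaCover ρ ψ φ).subtype))

variable (ρ ψ φ) in
/-- The inertia group of `ψ` in `G`, as the image of the inertia cover. -/
def inertiaGroup : Subgroup G :=
  (inertiaCover ρ ψ φ).map (MonoidHom.fst G _)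

theorem mem_inertiaGroup {g : G} : g ∈ inertiaGroup ρ ψ φ ↔ ∃ B, (g, B) ∈ inertiaCover ρ ψ φ := by
  simp [inertiaGroup, Subgroup.mem_map]

theorem apply_mem_isotypicPart {g : G} (hg : g ∈ inertiaGroup ρ ψ φ) {v : V}
    (hv : v ∈ isotypicPart ψ (ρ.comp φ)) : ρ g v ∈ isotypicPart ψ (ρ.comp φ) := by
  obtain ⟨B, A, hA⟩ := mem_inertiaGroup.mp hg
  have h_le : isotypicPart ψ (ρ.comp φ) ≤ (isotypicPart ψ (ρ.comp φ)).comap (ρ g) := by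
    refine iSup_le fun f => ?_
    rintro _ ⟨u, rfl⟩
    exact Submodule.mem_iSup_of_mem (B f) ⟨A u, hA f u⟩
  exact h_le hv

theorem range_sup_ker_le_inertiaGroup : φ.range ⊔ MonoidHom.ker ρ ≤ inertiaGroup ρ ψ φ := by
  refine sup_le ?_ fun z hz => mem_inertiaGroup.mpr ⟨1, LinearEquiv.refl k U, fun f u => ?_⟩
  · rintro _ ⟨n, rfl⟩
    refine mem_inertiaGroup.mpr ⟨1, LinearEquiv.ofBijective (ψ n) (ψ.apply_bijective n), ?_⟩
    exact fun f u => IntertwiningMap.isIntertwining _ _ f n u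
  · simp [MonoidHom.mem_ker.mp hz]

theorem exists_smul_specialLinearGroup {W : Type*} [AddCommGroup W] [Module k W] [IsAlgClosed k]
    [FiniteDimensional k W] [Nontrivial W] (B : W ≃ₗ[k] W) :
    ∃ (c : kˣ) (S : SpecialLinearGroup k W), ∀ w, S w = c • B w := by
  have h_dim : finrank k W ≠ 0 := finrank_pos.ne'
  obtain ⟨c, hc⟩ := IsAlgClosed.exists_pow_nat_eq ((LinearEquiv.det B)⁻¹ : kˣ).val
    h_dim.bot_lt
  have hc0 : c ≠ 0 := by
    rintro rfl
    rw [zero_pow h_dim] at hc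
    exact (Units.ne_zero _) hc.symm
  refine ⟨Units.mk0 c hc0, ⟨B ≪≫ₗ LinearEquiv.smulOfUnit (Units.mk0 c hc0), ?_⟩, fun w => rfl⟩
  have h_smul : (B ≪≫ₗ LinearEquiv.smulOfUnit (Units.mk0 c hc0)).toLinearMap = c • B.toLinearMap :=
    rfl
  rw [Units.ext_iff, LinearEquiv.coe_det, h_smul, LinearMap.det_smul, hc, ← LinearEquiv.coe_det,
    Units.inv_mul, Units.val_one]

theorem mem_inertiaGroup_of_forall_comp [IsAlgClosed k] [FiniteDimensional k U]
    [FiniteDimensional k V] [Nontrivial (IntertwiningMap ψ (ρ.comp φ))] [hφ : φ.range.Normal]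
    {g : G} {A : U ≃ₗ[k] U} (hA : ∀ m n, φ m * g = g * φ n → ∀ u, A (ψ n u) = ψ m (A u)) :
    g ∈ inertiaGroup ρ ψ φ := by
  have h_intertwining (f : IntertwiningMap ψ (ρ.comp φ)) (m : N) (u : U) :
      ρ g (f (A.symm (ψ m u))) = ρ (φ m) (ρ g (f (A.symm u))) := by
    obtain ⟨n, hn⟩ : ∃ n, φ n = g⁻¹ * φ m * g := by
      simpa using hφ.conj_mem (φ m) ⟨m, rfl⟩ g⁻¹
    have hn : φ m * g = g * φ n := by rw [hn]; group
    have h_symm : A.symm (ψ m u) = ψ n (A.symm u) := by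
      rw [A.symm_apply_eq, hA m n hn, A.apply_symm_apply]
    have h_rho : ρ g (ρ (φ n) (f (A.symm u))) = ρ (φ m) (ρ g (f (A.symm u))) := by
      simp only [← End.mul_apply, ← map_mul, hn]
    rw [h_symm, IntertwiningMap.isIntertwining, MonoidHom.comp_apply, h_rho]
  let B : End k (IntertwiningMap ψ (ρ.comp φ)) :=
    { toFun f := ⟨ρ g ∘ₗ f.toLinearMap ∘ₗ A.symm.toLinearMap,
        fun m => LinearMap.ext (h_intertwining f m)⟩
      map_add' f f' := by ext u; simp
      map_smul' c f := by ext u; simp }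
  have B_apply (f u) : B f (A u) = ρ g (f u) := by
    change ρ g (f (A.symm (A u))) = _
    rw [A.symm_apply_apply]
  have B_inj : Function.Injective B := fun f f' hff' => by
    ext u
    refine (ρ.apply_bijective g).1 ?_
    change ρ g (f u) = ρ g (f' u)
    rw [← B_apply, ← B_apply, hff']
  obtain ⟨c, S, hS⟩ := exists_smul_specialLinearGroup (LinearEquiv.ofInjectiveEndo B B_inj)
  refine mem_inertiaGroup.mpr ⟨S, A ≪≫ₗ LinearEquiv.smulOfUnit c⁻¹, fun f u => ?_⟩
  have hS' : S f = (c : k) • B f := hS f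
  change S f ((c⁻¹ : kˣ).val • A u) = _
  rw [hS', map_smul, IntertwiningMap.coe_smul, Pi.smul_apply, B_apply, smul_smul, Units.inv_mul,
    one_smul]

theorem mem_inertiaGroup_of_apply_ne_zero [IsAlgClosed k] [FiniteDimensional k U]
    [FiniteDimensional k V] [hφ : φ.range.Normal] [ψ.IsIrreducible] {g : G}
    {f : IntertwiningMap ψ (ρ.comp φ)} {h : IntertwiningMap (ρ.comp φ) ψ} {u : U}
    (hne : h (ρ g (f u)) ≠ 0) : g ∈ inertiaGroup ρ ψ φ := by
  let A : End k U := h.toLinearMap ∘ₗ ρ g ∘ₗ f.toLinearMap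
  have A_apply (u) : A u = h (ρ g (f u)) := rfl
  have hA (m n : N) (hmn : φ m * g = g * φ n) (u : U) : A (ψ n u) = ψ m (A u) := by
    have h_rho : ρ g (ρ (φ n) (f u)) = ρ (φ m) (ρ g (f u)) := by
      simp only [← End.mul_apply, ← map_mul, hmn]
    rw [A_apply, IntertwiningMap.isIntertwining, MonoidHom.comp_apply, h_rho, A_apply,
      ← IntertwiningMap.isIntertwining, MonoidHom.comp_apply]
  have A_inj : Function.Injective A := by
    refine (injective_iff_map_eq_zero A).mpr fun w hw => ?_
    by_contra hw0
    refine hne ?_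
    rw [← A_apply, eq_zero_of_forall_apply_eq_zero (ρ := ψ) hw0 A fun n => ?_, LinearMap.zero_apply]
    obtain ⟨m, hm⟩ := hφ.conj_mem (φ n) ⟨n, rfl⟩ g
    rw [hA m n (by simp [hm]), hw, map_zero]
  have : Nontrivial (IntertwiningMap ψ (ρ.comp φ)) := ⟨f, 0, by rintro rfl; simp at hne⟩
  exact mem_inertiaGroup_of_forall_comp (A := LinearEquiv.ofInjectiveEndo A A_inj) hA

variable [IsAlgClosed k] [FiniteDimensional k U] [ψ.IsIrreducible]

theorem exists_inertiaCoverRep_eq_smul_one [CharZero k] {γ : inertiaCover ρ ψ φ}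
    (hγ : γ.1.1 ∈ φ.range ⊔ MonoidHom.ker ρ) : ∃ c : k, inertiaCoverRep ρ ψ φ γ = c • 1 := by
  obtain ⟨⟨g, B⟩, hB⟩ := γ
  obtain ⟨A, hA⟩ := mem_inertiaCover.mp hB
  obtain ⟨_, ⟨n, rfl⟩, z, hz, rfl⟩ := Subgroup.mem_sup_of_normal_right.mp hγ
  let C : End k U := ψ n ∘ₗ A.symm.toLinearMap
  have hC (f u) : B f u = f (C u) := by
    simpa [MonoidHom.mem_ker.mp hz, C, IntertwiningMap.isIntertwining] using hA f (A.symm u)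
  suffices ∃ c : k, ∀ f, B f = c • f from this.imp fun c hc => LinearMap.ext hc
  rcases subsingleton_or_nontrivial (IntertwiningMap ψ (ρ.comp φ)) with _ | _
  · exact ⟨0, fun f => Subsingleton.elim _ _⟩
  obtain ⟨f₀, hf₀⟩ := exists_ne (0 : IntertwiningMap ψ (ρ.comp φ))
  have f₀_inj : Function.Injective f₀ :=
    (IsIrreducible.injective_or_eq_zero f₀).resolve_right hf₀
  have hC_comm (m : N) : Commute C (ψ m) := by
    refine LinearMap.ext fun u => f₀_inj ?_
    change f₀ (C (ψ m u)) = f₀ (ψ m (C u))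
    rw [← hC, IntertwiningMap.isIntertwining, IntertwiningMap.isIntertwining, hC]
  refine ⟨LinearMap.trace k U C / finrank k U, fun f => ?_⟩
  ext u
  have hCu : C u = (LinearMap.trace k U C / finrank k U) • u :=
    LinearMap.congr_fun (eq_trace_div_finrank_smul_one hC_comm) u
  exact (hC f u).trans (hCu ▸ map_smul f _ u)

variable [FiniteDimensional k V]

open scoped Classical in
theorem apply_isProj_isotypicPart_conj [φ.range.Normal] {e : End k V}
    (he : LinearMap.IsProj (isotypicPart ψ (ρ.comp φ)) e) (h : IntertwiningMap (ρ.comp φ) ψ)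
    (f : IntertwiningMap ψ (ρ.comp φ)) (g : G) (u : U) :
    h (ρ g (e (ρ g⁻¹ (f u)))) = if g ∈ inertiaGroup ρ ψ φ then h (f u) else 0 := by
  split_ifs with hg
  · have h_mem : ρ g⁻¹ (f u) ∈ isotypicPart ψ (ρ.comp φ) :=
      apply_mem_isotypicPart (inv_mem hg) (Submodule.mem_iSup_of_mem f ⟨u, rfl⟩)
    rw [he.map_id _ h_mem, ρ.self_inv_apply]
  · have h_le : isotypicPart ψ (ρ.comp φ) ≤ LinearMap.ker (h.toLinearMap ∘ₗ ρ g) := by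
      refine iSup_le fun f' => ?_
      rintro _ ⟨w, rfl⟩
      by_contra hne
      exact hg (mem_inertiaGroup_of_apply_ne_zero hne)
    exact h_le (he.map_mem _)

variable [CharZero k]

theorem finite_inertiaCover [Finite G] : Finite (inertiaCover ρ ψ φ) := by
  let π : inertiaCover ρ ψ φ →* G := (MonoidHom.fst G _).comp (inertiaCover ρ ψ φ).subtype
  have h_center (γ : π.ker) : γ.1.1.2 ∈ Subgroup.center _ := by
    have hγ : γ.1.1.1 = 1 := γ.2
    obtain ⟨c, hc⟩ := exists_inertiaCoverRep_eq_smul_one (γ := γ.1) (hγ ▸ one_mem _)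
    have hc (f) : γ.1.1.2 f = c • f := LinearMap.congr_fun hc f
    exact Subgroup.mem_center_iff.mpr fun S => SpecialLinearGroup.ext _ _ fun f => by simp [hc]
  have : NeZero (max (finrank k (IntertwiningMap ψ (ρ.comp φ))) 1) := ⟨by simp⟩
  have : Finite (Subgroup.center (SpecialLinearGroup k (IntertwiningMap ψ (ρ.comp φ)))) :=
    Finite.of_equiv _ SpecialLinearGroup.centerEquivRootsOfUnity.symm.toEquiv
  have : Finite π.ker := by
    refine Finite.of_injective (fun γ => (⟨_, h_center γ⟩ : Subgroup.center _)) fun γ γ' h => ?_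
    exact Subtype.ext (Subtype.ext (Prod.ext (γ.2.trans γ'.2.symm) (congrArg Subtype.val h)))
  exact π.finite_iff_finite_ker_range.mpr ⟨this, inferInstance⟩

variable [Finite N] [φ.range.Normal] [ρ.IsIrreducible]

theorem isIrreducible_inertiaCoverRep [Nontrivial (IntertwiningMap ψ (ρ.comp φ))] :
    (inertiaCoverRep ρ ψ φ).IsIrreducible := by
  refine isIrreducible_of_forall_dual_eq_zero fun f₀ hf₀ l hl => ?_
  obtain ⟨h, hh⟩ := exists_intertwiningMap_apply_eq_smul l
  have f₀_inj := (IsIrreducible.injective_or_eq_zero f₀).resolve_right hf₀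
  have : Nontrivial U :=
    finrank_pos_iff.mp (pos_iff_ne_zero.mpr (finrank_ne_zero_of_isIrreducible ψ))
  obtain ⟨u, hu⟩ := exists_ne (0 : U)
  have h_orbit (g : G) : h (ρ g (f₀ u)) = 0 := by
    by_contra hne
    obtain ⟨B, hB⟩ := mem_inertiaGroup.mp (mem_inertiaGroup_of_apply_ne_zero hne)
    obtain ⟨A, hA⟩ := mem_inertiaCover.mp hB
    refine hne ?_
    rw [← hA, hh, show l (B f₀) = 0 from hl ⟨_, hB⟩, zero_smul]
  have h_zero : h.toLinearMap = 0 :=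
    eq_zero_of_forall_apply_eq_zero ((map_ne_zero_iff f₀ f₀_inj).mpr hu) _ h_orbit
  ext f
  refine (smul_eq_zero.mp ?_).resolve_right hu
  rw [← hh, ← IntertwiningMap.toLinearMap_apply, h_zero, LinearMap.zero_apply]

variable (ρ ψ φ) in
/-- Both sides evaluate `h (∑ g, ρ g (e (ρ g⁻¹ (f u))))`, where `e` projects onto the isotypic part
and `h ∘ f` is a nonzero scalar: only the `g` in the inertia group contribute. -/
theorem card_mul_finrank_eq_card_inertiaGroup_mul_finrank [Finite G]
    [Nontrivial (IntertwiningMap ψ (ρ.comp φ))] :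
    Nat.card G * (finrank k (IntertwiningMap ψ (ρ.comp φ)) * finrank k U) =
      Nat.card (inertiaGroup ρ ψ φ) * finrank k V := by
  classical
  have := Fintype.ofFinite G
  obtain ⟨e, he, h_trace⟩ := exists_isProj_isotypicPart ψ (ρ.comp φ)
  obtain ⟨f, h, u, hhu⟩ := exists_apply_apply_ne_zero (ψ := ψ) (σ := ρ.comp φ)
  have h_sum : (Nat.card (inertiaGroup ρ ψ φ) : k) • h (f u) =
      (Fintype.card G * LinearMap.trace k V e / finrank k V) • h (f u) := by
    have h_eval := congrArg h (sumConj_self_apply (ρ := ρ) e (f u))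
    simp only [sumConj_apply, map_sum, apply_isProj_isotypicPart_conj he, map_smul] at h_eval
    rw [← h_eval, Finset.sum_ite, Finset.sum_const, Finset.sum_const_zero, add_zero,
      Nat.cast_smul_eq_nsmul, Nat.card_eq_fintype_card, Fintype.card_subtype]
  have hV : (finrank k V : k) ≠ 0 := Nat.cast_ne_zero.mpr (finrank_ne_zero_of_isIrreducible ρ)
  have h_card := smul_left_injective k hhu h_sum
  rw [h_trace, eq_div_iff hV] at h_card
  rw [Nat.card_eq_fintype_card]
  exact_mod_cast h_card.symm

theorem finrank_dvd_index_mul_finrank [Finite G]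
    (hψ : Nontrivial (IntertwiningMap ψ (ρ.comp φ))) :
    finrank k V ∣ (φ.range ⊔ MonoidHom.ker ρ).index * finrank k U := by
  set W := IntertwiningMap ψ (ρ.comp φ)
  set T := inertiaGroup ρ ψ φ
  set K := φ.range ⊔ MonoidHom.ker ρ
  have h_degree : finrank k V = T.index * (finrank k W * finrank k U) := by
    refine Nat.eq_of_mul_eq_mul_left (Nat.card_pos (α := T)) ?_
    rw [← mul_assoc, T.card_mul_index, card_mul_finrank_eq_card_inertiaGroup_mul_finrank]
  let π : inertiaCover ρ ψ φ →* G := (MonoidHom.fst G _).comp (inertiaCover ρ ψ φ).subtype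
  have h_range : π.range = T := by
    rw [MonoidHom.range_comp, Subgroup.range_subtype]
    rfl
  have := finite_inertiaCover (ρ := ρ) (ψ := ψ) (φ := φ)
  have := isIrreducible_inertiaCoverRep (ρ := ρ) (ψ := ψ) (φ := φ)
  have h_dvd : finrank k W ∣ K.relIndex T := by
    rw [← h_range, ← Subgroup.index_comap]
    exact finrank_dvd_index_of_forall_eq_smul_one (inertiaCoverRep ρ ψ φ)
      fun γ hγ => exists_inertiaCoverRep_eq_smul_one hγ
  rw [h_degree, ← Subgroup.relIndex_mul_index (range_sup_ker_le_inertiaGroup : K ≤ T),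
    mul_comm (K.relIndex T), mul_assoc]
  exact mul_dvd_mul_left _ (mul_dvd_mul_right h_dvd _)

end InertiaCover

section Constituent

variable {k G V W : Type*} [Field k] [Group G] [AddCommGroup V] [Module k V] [AddCommGroup W]
  [Module k W] {ρ : Representation k G V}

theorem isIrreducible_toRepresentation_of_isAtom {S : Subrepresentation ρ} (hS : IsAtom S) :
    S.toRepresentation.IsIrreducible where
  exists_pair_ne := ⟨⊥, ⊤, fun h => hS.1 (Subrepresentation.toSubmodule_injective
    (Submodule.subsingleton_iff_eq_bot.mp ((Submodule.subsingleton_iff k).mp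
      (subsingleton_of_bot_eq_top (congrArg Subrepresentation.toSubmodule h)))))⟩
  eq_bot_or_eq_top T := by
    let T' : Subrepresentation ρ :=
      { toSubmodule := T.toSubmodule.map S.toSubmodule.subtype
        apply_mem_toSubmodule := by
          rintro g _ ⟨v, hv, rfl⟩
          exact ⟨_, T.apply_mem_toSubmodule g hv, rfl⟩ }
    have hT' : T' ≤ S := Submodule.map_subtype_le _ _
    refine (hS.le_iff.mp hT').imp (fun h => ?_) fun h => ?_ <;>
      refine Subrepresentation.toSubmodule_injective
        (Submodule.map_injective_of_injective S.toSubmodule.injective_subtype ?_)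
    · exact (congrArg Subrepresentation.toSubmodule h).trans (Submodule.map_bot _).symm
    · exact (congrArg Subrepresentation.toSubmodule h).trans (Submodule.map_subtype_top _).symm

theorem exists_isAtom_apply_ne_zero [Finite G] [NeZero (Nat.card G : k)] {T : V →ₗ[k] W}
    (hT : T ≠ 0) : ∃ S : Subrepresentation ρ, IsAtom S ∧ ∃ v ∈ S, T v ≠ 0 := by
  have : IsSemisimpleModule (MonoidAlgebra k G) ρ.asModule :=
    (isSemisimpleRepresentation_iff_isSemisimpleModule_asModule ρ).mp inferInstance
  obtain ⟨s, hs, hs_atom⟩ := eq_sSup_atoms (⊤ : Submodule (MonoidAlgebra k G) ρ.asModule)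
  let e := Subrepresentation.subrepresentationSubmoduleOrderIso (ρ := ρ)
  by_contra! h_zero
  refine hT (eq_zero_of_kerCore_eq_top (e.injective (e.map_top.symm ▸ top_le_iff.mp ?_)))
  rw [hs]
  refine sSup_le fun M hM => e.symm_apply_le.mp fun v hv => mem_kerCore.mpr fun g => ?_
  exact h_zero _ ((e.symm.isAtom_iff M).mpr (hs_atom M hM)) _
    ((e.symm M).apply_mem_toSubmodule g hv)

variable {N U : Type*} [Group N] [Finite N] [AddCommGroup U] [Module k U]
  {ψ : Representation k N U} [ψ.IsIrreducible]

theorem nontrivial_intertwiningMap_of_ne_zero [NeZero (Nat.card N : k)]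
    {σ : Representation k N V} {h : IntertwiningMap σ ψ} (hh : h ≠ 0) :
    Nontrivial (IntertwiningMap ψ σ) := by
  have := Fintype.ofFinite N
  have h_surj : Function.Surjective h := (IsIrreducible.surjective_or_eq_zero h).resolve_right hh
  obtain ⟨T, hT⟩ := h.toLinearMap.exists_rightInverse_of_surjective
    (LinearMap.range_eq_top.mpr h_surj)
  have hT (u : U) : h (T u) = u := LinearMap.congr_fun hT u
  have h_sum (u : U) : h (sumConj ψ σ T u) = (Nat.card N : k) • u := by
    simp [sumConj_apply, IntertwiningMap.isIntertwining, hT, Nat.cast_smul_eq_nsmul]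
  refine ⟨sumConj ψ σ T, 0, fun h_zero => hh ?_⟩
  ext v
  have hv : (Nat.card N : k) • h v = 0 := by simpa [h_zero] using (h_sum (h v)).symm
  exact (smul_eq_zero.mp hv).resolve_left (NeZero.ne _)

theorem exists_isIrreducible_constituent [IsAlgClosed k] [CharZero k] [FiniteDimensional k U]
    [Finite G] {φ : N →* G}
    (hψ : Nontrivial (IntertwiningMap ψ (ρ.comp φ))) :
    ∃ S : Subrepresentation ρ, S.toRepresentation.IsIrreducible ∧
      Nontrivial (IntertwiningMap S.toRepresentation ρ) ∧
      Nontrivial (IntertwiningMap ψ (S.toRepresentation.comp φ)) := by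
  obtain ⟨f, h, u, hhu⟩ := exists_apply_apply_ne_zero (ψ := ψ) (σ := ρ.comp φ)
  have h_ne : h.toLinearMap ≠ 0 := fun h_zero => hhu (LinearMap.congr_fun h_zero (f u))
  obtain ⟨S, hS, v, hv, hhv⟩ := exists_isAtom_apply_ne_zero (ρ := ρ) h_ne
  let incl : IntertwiningMap S.toRepresentation ρ := ⟨S.toSubmodule.subtype, fun g => rfl⟩
  let h_S : IntertwiningMap (S.toRepresentation.comp φ) ψ :=
    ⟨h.toLinearMap ∘ₗ S.toSubmodule.subtype, fun n => by
      ext w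
      exact IntertwiningMap.isIntertwining _ _ h n w⟩
  have h_S_ne : h_S ≠ 0 := fun h_zero => hhv (DFunLike.congr_fun h_zero ⟨v, hv⟩)
  have h_incl : incl ≠ 0 := fun h_zero => hhv (by
    rw [show v = 0 from DFunLike.congr_fun h_zero (⟨v, hv⟩ : S.toSubmodule), map_zero])
  exact ⟨S, isIrreducible_toRepresentation_of_isAtom hS, ⟨incl, 0, h_incl⟩,
    nontrivial_intertwiningMap_of_ne_zero h_S_ne⟩

end Constituent

section Codegree

variable {k G N U V : Type*} [Field k] [Group G] [Group N] [AddCommGroup U] [Module k U]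
  [AddCommGroup V] [Module k V] {ρ : Representation k G V} {ψ : Representation k N U} {φ : N →* G}

variable (ρ) in
/-- The codegree `|G : ker ρ| / dim ρ` of a representation, with the truncating division of `ℕ`;
the division is exact for irreducible `ρ` (see `finrank_mul_codegree`). -/
noncomputable def codegree : ℕ :=
  (MonoidHom.ker ρ).index / finrank k V

variable (ρ) in
theorem finrank_mul_codegree [IsAlgClosed k] [CharZero k] [Finite G] [FiniteDimensional k V]
    [ρ.IsIrreducible] : finrank k V * codegree ρ = (MonoidHom.ker ρ).index :=
  Nat.mul_div_cancel' (finrank_dvd_index_of_forall_eq_smul_one ρ fun z hz =>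
    ⟨1, by rw [one_smul, MonoidHom.mem_ker.mp hz]⟩)

theorem comap_ker_le_ker [ψ.IsIrreducible] (hψ : Nontrivial (IntertwiningMap ψ (ρ.comp φ))) :
    (MonoidHom.ker ρ).comap φ ≤ MonoidHom.ker ψ := by
  intro n hn
  obtain ⟨f, hf⟩ := exists_ne (0 : IntertwiningMap ψ (ρ.comp φ))
  refine MonoidHom.mem_ker.mpr (LinearMap.ext fun u => ?_)
  refine (IsIrreducible.injective_or_eq_zero f).resolve_right hf ?_
  rw [IntertwiningMap.isIntertwining, MonoidHom.comp_apply, MonoidHom.mem_ker.mp hn]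
  rfl

theorem index_comap_mul_index_range_sup (K : Subgroup G) [K.Normal] :
    (K.comap φ).index * (φ.range ⊔ K).index = K.index := by
  rw [Subgroup.index_comap, ← Subgroup.relIndex_sup_right]
  exact Subgroup.relIndex_mul_index le_sup_right

theorem codegree_dvd_codegree_of_normal_range [IsAlgClosed k] [CharZero k] [Finite G] [Finite N]
    [FiniteDimensional k U] [FiniteDimensional k V] [ρ.IsIrreducible] [ψ.IsIrreducible]
    [φ.range.Normal] (hψ : Nontrivial (IntertwiningMap ψ (ρ.comp φ))) :
    codegree ψ ∣ codegree ρ := by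
  refine Nat.dvd_of_mul_dvd_mul_left
    (pos_iff_ne_zero.mpr (finrank_ne_zero_of_isIrreducible ρ)) ?_
  calc finrank k V * codegree ψ
      ∣ (φ.range ⊔ MonoidHom.ker ρ).index * finrank k U * codegree ψ :=
        mul_dvd_mul_right (finrank_dvd_index_mul_finrank hψ) _
    _ = (MonoidHom.ker ψ).index * (φ.range ⊔ MonoidHom.ker ρ).index := by
        rw [mul_assoc, finrank_mul_codegree, mul_comm]
    _ ∣ ((MonoidHom.ker ρ).comap φ).index * (φ.range ⊔ MonoidHom.ker ρ).index :=
        mul_dvd_mul_right (Subgroup.index_dvd_of_le (comap_ker_le_ker hψ)) _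
    _ = finrank k V * codegree ρ := by
        rw [index_comap_mul_index_range_sup, finrank_mul_codegree]

end Codegree

section Character

open scoped ComplexOrder in
theorem exists_posDef_conjTranspose_mul_mul_eq {G n : Type*} [Group G] [Finite G] [Fintype n]
    [DecidableEq n] (D : G →* Matrix n n ℂ) :
    ∃ Q : Matrix n n ℂ, Q.PosDef ∧ ∀ g, (D g).conjTranspose * Q * D g = Q := by
  classical
  have := Fintype.ofFinite G
  refine ⟨∑ x, (D x).conjTranspose * D x, ?_, fun g => ?_⟩
  · rw [← Finset.add_sum_erase _ _ (Finset.mem_univ (1 : G)), map_one, Matrix.conjTranspose_one,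
      mul_one]
    exact Matrix.PosDef.one.add_posSemidef
      (Matrix.posSemidef_sum _ fun x _ => Matrix.posSemidef_conjTranspose_mul_self _)
  · rw [Finset.mul_sum, Finset.sum_mul]
    refine Fintype.sum_equiv (Equiv.mulRight g) _ _ fun x => ?_
    simp [Matrix.mul_assoc]

open scoped ComplexOrder in
theorem star_character {G V : Type*} [Group G] [Finite G] [AddCommGroup V] [Module ℂ V]
    [FiniteDimensional ℂ V] (ρ : Representation ℂ G V) (g : G) :
    star (ρ.character g) = ρ.character g⁻¹ := by
  let b := finBasis ℂ V
  let D : G →* Matrix (Fin (finrank ℂ V)) (Fin (finrank ℂ V)) ℂ :=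
    (LinearMap.toMatrixAlgEquiv b : End ℂ V →* _).comp ρ
  have character_eq (x : G) : ρ.character x = (D x).trace :=
    LinearMap.trace_eq_matrix_trace ℂ b (ρ x)
  obtain ⟨Q, hQ, h_inv⟩ := exists_posDef_conjTranspose_mul_mul_eq D
  obtain ⟨Q, rfl⟩ := hQ.isUnit
  have h_conj : (D g).conjTranspose = Q.1 * D g⁻¹ * (Q⁻¹).1 := by
    rw [Units.eq_mul_inv_iff_mul_eq]
    conv_rhs => rw [← h_inv g]
    rw [mul_assoc, ← map_mul, mul_inv_cancel, map_one, mul_one]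
  rw [character_eq, character_eq, ← Matrix.trace_conjTranspose, h_conj, Matrix.trace_units_conj]

theorem nontrivial_intertwiningMap_of_innerChar_ne_zero {G : Type} {V U : Type*} [Group G]
    [Finite G] [AddCommGroup V] [Module ℂ V] [FiniteDimensional ℂ V] [AddCommGroup U] [Module ℂ U]
    [FiniteDimensional ℂ U] {σ : Representation ℂ G V} {ψ : Representation ℂ G U}
    (h : innerChar G σ.character ψ.character ≠ 0) : Nontrivial (IntertwiningMap ψ σ) := by
  have := Fintype.ofFinite G
  have := invertibleOfNonzero (Nat.cast_ne_zero.mpr Nat.card_pos.ne' : (Nat.card G : ℂ) ≠ 0)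
  have h_inner : innerChar G σ.character ψ.character = finrank ℂ (IntertwiningMap ψ σ) := by
    rw [← card_inv_mul_sum_char_mul_char_eq_finrank, innerChar, finsum_eq_sum_of_fintype,
      div_eq_inv_mul]
    simp only [starRingEnd_apply, star_character]
  refine (finrank_pos_iff (R := ℂ)).mp (pos_iff_ne_zero.mpr fun h_zero => h ?_)
  rw [h_inner, h_zero, Nat.cast_zero]

end Character

section FDRep

universe u

theorem codeg_eq_codegree {G : Type} [Group G] (V : FDRep ℂ G) : codeg V = codegree V.ρ := by
  have h_ker : charKer V = MonoidHom.ker V.ρ := by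
    ext g
    simp only [charKer, MonoidHom.mem_ker, Units.ext_iff]
    rfl
  rw [codeg, codegree, h_ker]

instance isIrreducible_of_simple {k : Type u} {G : Type*} [Field k] [Group G] (V : FDRep k G)
    [Simple V] : Representation.IsIrreducible V.ρ where
  exists_pair_ne := by
    refine ⟨⊥, ⊤, fun h => id_nonzero V ?_⟩
    have : Subsingleton V := (Submodule.subsingleton_iff k).mp
      (subsingleton_of_bot_eq_top (congrArg Subrepresentation.toSubmodule h))
    ext v
    exact Subsingleton.elim (α := V) _ _
  eq_bot_or_eq_top S := by
    let ι : FDRep.of S.toRepresentation ⟶ V :=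
      ⟨InducedCategory.homMk (ModuleCat.ofHom S.toSubmodule.subtype), fun g => rfl⟩
    have : Mono ι := ConcreteCategory.mono_of_injective _ S.toSubmodule.injective_subtype
    refine (eq_or_ne ι 0).imp (fun hι => ?_) fun hι => ?_
    · refine Subrepresentation.toSubmodule_injective ((Submodule.eq_bot_iff _).mpr fun v hv => ?_)
      exact congrArg (fun α : FDRep.of S.toRepresentation ⟶ V =>
        α.hom.hom.hom (⟨v, hv⟩ : S.toSubmodule)) hι
    · have := isIso_of_mono_of_nonzero hι
      refine Subrepresentation.toSubmodule_injective (top_le_iff.mp fun v _ => ?_)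
      have h_inv : (inv ι ≫ ι).hom.hom.hom v = v := by rw [IsIso.inv_hom_id]; rfl
      exact h_inv ▸ Subtype.property (p := (· ∈ S.toSubmodule)) ((inv ι).hom.hom.hom v)

end FDRep

theorem IsSubnormal.isSubnormal {G : Type} [Group G] {M : Subgroup G} (hM : IsSubnormal M) :
    M.IsSubnormal := by
  obtain ⟨n, c, rfl, h_last, hc⟩ := hM
  suffices ∀ i, (c i).IsSubnormal from this 0
  intro i
  induction i using Fin.reverseInduction with
  | last => exact h_last ▸ .top
  | cast i ih => exact .step _ _ (hc i).1 ih (hc i).2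

universe u in
theorem stmt_2_general {k G : Type*} {V : Type u} [Field k] [IsAlgClosed k] [CharZero k]
    [Group G] [Finite G] [AddCommGroup V] [Module k V] [FiniteDimensional k V]
    (ρ : Representation k G V) [ρ.IsIrreducible] {M : Subgroup G} (hM : M.IsSubnormal)
    {U : Type u} [AddCommGroup U] [Module k U] [FiniteDimensional k U] (ψ : Representation k M U)
    [ψ.IsIrreducible] (hψ : Nontrivial (IntertwiningMap ψ (ρ.comp M.subtype))) :
    codegree ψ ∣ codegree ρ := by
  induction hM generalizing U with
  | top =>
    have : (⊤ : Subgroup G).subtype.range.Normal := by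
      rw [Subgroup.range_subtype]
      infer_instance
    exact codegree_dvd_codegree_of_normal_range hψ
  | step H K hHK _ hH ih =>
    obtain ⟨S, hS, hSρ, hψS⟩ := exists_isIrreducible_constituent (ψ := ψ)
      (ρ := ρ.comp K.subtype) (φ := Subgroup.inclusion hHK) hψ
    have : (Subgroup.inclusion hHK).range.Normal := by rwa [Subgroup.inclusion_range]
    exact (codegree_dvd_codegree_of_normal_range hψS).trans (ih S.toRepresentation hSρ)

theorem stmt_2 {G : Type} [Group G] [Finite G] (M : Subgroup G) (hM : IsSubnormal M)
    (χ : FDRep ℂ G) (hχ : Simple χ) (ψ : FDRep ℂ ↥M) (hψ : Simple ψ)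
    (hcons : innerChar ↥M (fun m => χ.character ↑m) ψ.character ≠ 0) :
    codeg ψ ∣ codeg χ := by
  rw [codeg_eq_codegree, codeg_eq_codegree]
  exact stmt_2_general χ.ρ hM.isSubnormal ψ.ρ
    (nontrivial_intertwiningMap_of_innerChar_ne_zero hcons)
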